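/- Let (u^t, v^t)_{t≥0} be a Greenkhorn-type sequence. Then for every t ≥ 0, f(u^t, v^t) − inf_{(u,v) ∈ ℝ^n × ℝ^n} f(u,v) ≤ 4R · E(u^t, v^t), where R = η^{-1}‖C‖_∞ + log n − 2 log(min_{1≤i,j≤n}{r_i, c_j}). -/

import Mathlib

open Finset

/-- ℓ∞-norm of a matrix: the maximum entry (entries are nonnegative). -/
noncomputable def matSup {n : ℕ} (C : Fin n → Fin n → ℝ) : ℝ := ⨆ i, ⨆ j, C i j

/-- min_{1 ≤ i, j ≤ n} { r_i, c_j }. -/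
noncomputable def minrc {n : ℕ} (r c : Fin n → ℝ) : ℝ := min (⨅ i, r i) (⨅ j, c j)

/-- The matrix B(u,v) with entries exp(u_i + v_j - C_ij/η). -/
noncomputable def Bmat {n : ℕ} (η : ℝ) (C : Fin n → Fin n → ℝ) (u v : Fin n → ℝ)
    (i j : Fin n) : ℝ := Real.exp (u i + v j - C i j / η)

/-- Row sums of B(u,v). -/
noncomputable def rowSum {n : ℕ} (η : ℝ) (C : Fin n → Fin n → ℝ) (u v : Fin n → ℝ)
    (i : Fin n) : ℝ := ∑ j, Bmat η C u v i j

/-- Column sums of B(u,v). -/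
noncomputable def colSum {n : ℕ} (η : ℝ) (C : Fin n → Fin n → ℝ) (u v : Fin n → ℝ)
    (j : Fin n) : ℝ := ∑ i, Bmat η C u v i j

/-- Dual objective f(u,v) = Σ_{ij} B(u,v)_{ij} - ⟨u,r⟩ - ⟨v,c⟩. -/
noncomputable def dualObj {n : ℕ} (η : ℝ) (C : Fin n → Fin n → ℝ) (r c : Fin n → ℝ)
    (u v : Fin n → ℝ) : ℝ :=
  (∑ i, ∑ j, Bmat η C u v i j) - (∑ i, u i * r i) - (∑ j, v j * c j)

/-- Residual E(u,v). -/
noncomputable def resid {n : ℕ} (η : ℝ) (C : Fin n → Fin n → ℝ) (r c : Fin n → ℝ)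
    (u v : Fin n → ℝ) : ℝ :=
  (∑ i, |rowSum η C u v i - r i|) + (∑ j, |colSum η C u v j - c j|)

/-- A single Greenkhorn-type update. -/
def GreenkhornStep {n : ℕ} (η : ℝ) (C : Fin n → Fin n → ℝ) (r c : Fin n → ℝ)
    (u v u' v' : Fin n → ℝ) : Prop :=
  (∃ I, u' I = u I + Real.log (r I) - Real.log (rowSum η C u v I) ∧
    (∀ i, i ≠ I → u' i = u i) ∧ v' = v) ∨
  (∃ J, v' J = v J + Real.log (c J) - Real.log (colSum η C u v J) ∧
    (∀ j, j ≠ J → v' j = v j) ∧ u' = u)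


/-- Kernel row sum without the left scaling. -/
noncomputable def KK {n : ℕ} (η : ℝ) (C : Fin n → Fin n → ℝ) (v : Fin n → ℝ) (i : Fin n) : ℝ :=
  ∑ j, Real.exp (v j - C i j / η)

/-- Row update. -/
noncomputable def TT {n : ℕ} (η : ℝ) (C : Fin n → Fin n → ℝ) (r v : Fin n → ℝ) (i : Fin n) : ℝ :=
  Real.log (r i) - Real.log (KK η C v i)

lemma KK_pos {n : ℕ} (η : ℝ) (C : Fin n → Fin n → ℝ) (v : Fin n → ℝ) (i : Fin n) :
    0 < KK η C v i :=
  Finset.sum_pos (fun _ _ => Real.exp_pos _) ⟨i, Finset.mem_univ _⟩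

lemma rowSum_eq {n : ℕ} (η : ℝ) (C : Fin n → Fin n → ℝ) (u v : Fin n → ℝ) (i : Fin n) :
    rowSum η C u v i = Real.exp (u i) * KK η C v i := by
  unfold rowSum KK Bmat
  rw [Finset.mul_sum]
  refine Finset.sum_congr rfl fun j _ => ?_
  rw [← Real.exp_add]; congr 1; ring

lemma colSum_swap {n : ℕ} (η : ℝ) (C : Fin n → Fin n → ℝ) (u v : Fin n → ℝ) (j : Fin n) :
    colSum η C u v j = rowSum η (fun a b => C b a) v u j := by
  unfold rowSum colSum Bmat
  refine Finset.sum_congr rfl fun i _ => ?_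
  rw [add_comm (u i)]

lemma dualObj_swap {n : ℕ} (η : ℝ) (C : Fin n → Fin n → ℝ) (r c u v : Fin n → ℝ) :
    dualObj η C r c u v = dualObj η (fun a b => C b a) c r v u := by
  unfold dualObj Bmat
  rw [Finset.sum_comm]
  simp only [add_comm (u _)]
  ring

lemma dualObj_eq {n : ℕ} (η : ℝ) (C : Fin n → Fin n → ℝ) (r c u v : Fin n → ℝ) :
    dualObj η C r c u v =
      (∑ i, (Real.exp (u i) * KK η C v i - u i * r i)) - ∑ j, v j * c j := by
  unfold dualObj
  rw [Finset.sum_sub_distrib]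
  congr 2
  exact Finset.sum_congr rfl fun i _ => rowSum_eq η C u v i

lemma g_lt (s r x : ℝ) (hs : 0 < s) (hr : 0 < r) (hx : x ≠ Real.log r - Real.log s) :
    Real.exp (Real.log r - Real.log s) * s - (Real.log r - Real.log s) * r
      < Real.exp x * s - x * r := by
  have h1 : Real.exp (Real.log r - Real.log s) * s = r := by
    rw [Real.exp_sub, Real.exp_log hs, Real.exp_log hr]; field_simp
  have h2 : Real.exp x * s = r * Real.exp (x - (Real.log r - Real.log s)) := by
    have : Real.exp x = Real.exp (x - (Real.log r - Real.log s)) *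
        Real.exp (Real.log r - Real.log s) := by
      rw [← Real.exp_add]; congr 1; ring
    rw [this, mul_assoc, h1, mul_comm]
  rw [h1, h2]
  have := Real.add_one_lt_exp (sub_ne_zero.mpr hx)
  nlinarith

lemma g_le (s r x : ℝ) (hs : 0 < s) (hr : 0 < r) :
    Real.exp (Real.log r - Real.log s) * s - (Real.log r - Real.log s) * r
      ≤ Real.exp x * s - x * r := by
  by_cases hx : x = Real.log r - Real.log s
  · rw [hx]
  · exact (g_lt s r x hs hr hx).le

lemma upd_le {n : ℕ} (η : ℝ) (C : Fin n → Fin n → ℝ) (r c u v : Fin n → ℝ) (hr : ∀ i, 0 < r i) :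
    dualObj η C r c (TT η C r v) v ≤ dualObj η C r c u v := by
  rw [dualObj_eq, dualObj_eq]
  refine sub_le_sub_right (Finset.sum_le_sum fun i _ => ?_) _
  exact g_le _ _ _ (KK_pos η C v i) (hr i)

lemma upd_eq {n : ℕ} (η : ℝ) (C : Fin n → Fin n → ℝ) (r c u v : Fin n → ℝ) (hr : ∀ i, 0 < r i)
    (h : dualObj η C r c u v ≤ dualObj η C r c (TT η C r v) v) (i : Fin n) :
    u i = TT η C r v i := by
  by_contra hne
  have : dualObj η C r c (TT η C r v) v < dualObj η C r c u v := by
    rw [dualObj_eq, dualObj_eq]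
    refine sub_lt_sub_right (Finset.sum_lt_sum (fun i _ => ?_) ⟨i, Finset.mem_univ _, ?_⟩) _
    · exact g_le _ _ _ (KK_pos η C v i) (hr i)
    · exact g_lt _ _ _ (KK_pos η C v i) (hr i) hne
  linarith

lemma dualObj_shift {n : ℕ} (η : ℝ) (C : Fin n → Fin n → ℝ) (r c u v : Fin n → ℝ)
    (hr1 : ∑ i, r i = 1) (hc1 : ∑ j, c j = 1) (a : ℝ) :
    dualObj η C r c (fun i => u i + a) (fun j => v j - a) = dualObj η C r c u v := by
  unfold dualObj Bmat
  simp only [add_mul, sub_mul, Finset.sum_add_distrib, Finset.sum_sub_distrib, ← Finset.mul_sum,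
    hr1, hc1]
  have : ∀ i j, u i + a + (v j - a) - C i j / η = u i + v j - C i j / η := fun i j => by ring
  simp only [this]
  ring

/-- log of the kernel sum is Lipschitz. -/
lemma KK_le {n : ℕ} (η : ℝ) (C C' : Fin n → Fin n → ℝ) (v w : Fin n → ℝ) (d : ℝ) (i k : Fin n)
    (h : ∀ j, v j - C i j / η ≤ w j - C' k j / η + d) :
    Real.log (KK η C v i) ≤ Real.log (KK η C' w k) + d := by
  rw [← Real.log_exp d, ← Real.log_mul (KK_pos _ _ _ _).ne' (Real.exp_pos _).ne']
  refine Real.log_le_log (KK_pos _ _ _ _) ?_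
  unfold KK
  rw [Finset.sum_mul]
  refine Finset.sum_le_sum fun j _ => ?_
  rw [← Real.exp_add]
  exact Real.exp_le_exp.mpr (h j)

lemma TT_lip {n : ℕ} (η : ℝ) (C : Fin n → Fin n → ℝ) (r v w : Fin n → ℝ) (d : ℝ)
    (h : ∀ j, |v j - w j| ≤ d) (i : Fin n) : |TT η C r v i - TT η C r w i| ≤ d := by
  have h1 := KK_le η C C v w d i i (fun j => by have := abs_le.mp (h j); linarith)
  have h2 := KK_le η C C w v d i i (fun j => by have := abs_le.mp (h j); linarith)
  unfold TT
  rw [abs_le]; constructor <;> linarith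

lemma step_TT {n : ℕ} (η : ℝ) (C : Fin n → Fin n → ℝ) (r u v : Fin n → ℝ) (i : Fin n) :
    u i + Real.log (r i) - Real.log (rowSum η C u v i) = TT η C r v i := by
  rw [rowSum_eq, Real.log_mul (Real.exp_pos _).ne' (KK_pos _ _ _ _).ne', Real.log_exp]
  unfold TT; ring

lemma exists_good {n : ℕ} (hn : 2 ≤ n) (η : ℝ) (C : Fin n → Fin n → ℝ) (L m : ℝ)
    (hC0 : ∀ i j, 0 ≤ C i j / η) (hCL : ∀ i j, C i j / η ≤ L)
    (r c : Fin n → ℝ) (hm : 0 < m) (hr : ∀ i, m ≤ r i) (hc : ∀ j, m ≤ c j)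
    (hr1 : ∑ i, r i = 1) (hc1 : ∑ j, c j = 1) (u v : Fin n → ℝ) :
    ∃ a b : Fin n → ℝ, (∀ i, |a i| ≤ L + Real.log n - 2 * Real.log m) ∧
      (∀ i, |b i| ≤ L + Real.log n - 2 * Real.log m) ∧
      dualObj η C r c a b ≤ dualObj η C r c u v := by
  have hn0 : (0:ℝ) < n := by positivity
  have hlogn : 0 ≤ Real.log n := Real.log_nonneg (by exact_mod_cast (by omega : 1 ≤ n))
  have hr0 : ∀ i, 0 < r i := fun i => hm.trans_le (hr i)
  have hc0 : ∀ i, 0 < c i := fun i => hm.trans_le (hc i)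
  have hrl : ∀ i, r i ≤ 1 := fun i => by
    rw [← hr1]; exact Finset.single_le_sum (fun j _ => (hr0 j).le) (Finset.mem_univ i)
  have hcl : ∀ i, c i ≤ 1 := fun i => by
    rw [← hc1]; exact Finset.single_le_sum (fun j _ => (hc0 j).le) (Finset.mem_univ i)
  have i0 : Fin n := ⟨0, by omega⟩
  have hlm : Real.log m ≤ 0 := Real.log_nonpos hm.le ((hr i0).trans (hrl i0))
  have hL : 0 ≤ L := (hC0 i0 i0).trans (hCL i0 i0)
  set w : Fin n → ℝ := TT η (fun a b => C b a) c u with hw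
  have : Nonempty (Fin n) := ⟨i0⟩
  obtain ⟨k, hk⟩ := Finite.exists_min w
  have hosc : ∀ j, w j - w k ≤ L - Real.log m := by
    intro j
    have h1 := KK_le η (fun a b => C b a) (fun a b => C b a) u u L k j
      (fun i => by have := hC0 i k; have := hCL i j; linarith)
    have h2 : Real.log (c j) ≤ 0 := Real.log_nonpos (hc0 j).le (hcl j)
    have h3 : Real.log m ≤ Real.log (c k) := Real.log_le_log hm (hc k)
    simp only [hw, TT]; linarith
  set b : Fin n → ℝ := fun j => w j - w k with hb
  refine ⟨TT η C r b, b, ?_, ?_, ?_⟩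
  · intro i
    have e : ∀ x : ℝ, KK η (fun _ _ => 0) (fun _ => x) i = n * Real.exp x := by
      intro x; simp [KK]
    have h1 := KK_le η C (fun _ _ => 0) b (fun _ => 0) (L - Real.log m) i i
      (fun j => by have := hC0 i j; have := hosc j; simp only [hb]; simp; linarith)
    have h2 := KK_le η (fun _ _ => 0) C (fun _ => 0) b L i i
      (fun j => by have := hCL i j; have := hk j; simp only [hb]; simp; linarith)
    rw [e] at h1 h2
    simp only [Real.exp_zero, mul_one] at h1 h2
    have h3 : Real.log (r i) ≤ 0 := Real.log_nonpos (hr0 i).le (hrl i)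
    have h4 : Real.log m ≤ Real.log (r i) := Real.log_le_log hm (hr i)
    unfold TT
    rw [abs_le]; constructor <;> linarith
  · intro j
    have := hosc j
    have := hk j
    simp only [hb]
    rw [abs_le]; constructor <;> linarith
  · calc _ ≤ dualObj η C r c (fun i => u i + w k) b := upd_le η C r c _ b hr0
      _ = dualObj η C r c u w := dualObj_shift η C r c u w hr1 hc1 _
      _ ≤ dualObj η C r c u v := by
        rw [dualObj_swap, dualObj_swap η C r c u v]
        exact upd_le η _ c r v u hc0

lemma exists_min' {n : ℕ} (hn : 2 ≤ n) (η : ℝ) (C : Fin n → Fin n → ℝ) (L m : ℝ)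
    (hC0 : ∀ i j, 0 ≤ C i j / η) (hCL : ∀ i j, C i j / η ≤ L)
    (r c : Fin n → ℝ) (hm : 0 < m) (hr : ∀ i, m ≤ r i) (hc : ∀ j, m ≤ c j)
    (hr1 : ∑ i, r i = 1) (hc1 : ∑ j, c j = 1) :
    ∃ a b : Fin n → ℝ, (∀ i, |a i| ≤ L + Real.log n - 2 * Real.log m) ∧
      (∀ i, |b i| ≤ L + Real.log n - 2 * Real.log m) ∧
      ∀ u v, dualObj η C r c a b ≤ dualObj η C r c u v := by
  set R := L + Real.log n - 2 * Real.log m with hR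
  have hK : IsCompact ((Set.univ.pi fun _ : Fin n => Set.Icc (-R) R) ×ˢ
      (Set.univ.pi fun _ : Fin n => Set.Icc (-R) R)) :=
    (isCompact_univ_pi fun _ => isCompact_Icc).prod (isCompact_univ_pi fun _ => isCompact_Icc)
  have hcont : Continuous fun p : (Fin n → ℝ) × (Fin n → ℝ) => dualObj η C r c p.1 p.2 := by
    unfold dualObj Bmat
    fun_prop
  have hg := exists_good hn η C L m hC0 hCL r c hm hr hc hr1 hc1
  have hne : ((Set.univ.pi fun _ : Fin n => Set.Icc (-R) R) ×ˢ
      (Set.univ.pi fun _ : Fin n => Set.Icc (-R) R)).Nonempty := by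
    obtain ⟨a, b, ha, hb, -⟩ := hg 0 0
    exact ⟨(a, b), fun i _ => abs_le.mp (ha i), fun i _ => abs_le.mp (hb i)⟩
  obtain ⟨q, hq, hmin⟩ := hK.exists_isMinOn hne hcont.continuousOn
  refine ⟨q.1, q.2, fun i => abs_le.mpr (hq.1 i (Set.mem_univ _)),
    fun i => abs_le.mpr (hq.2 i (Set.mem_univ _)), fun u v => ?_⟩
  obtain ⟨a, b, ha, hb, hab⟩ := hg u v
  have h : (a, b) ∈ ((Set.univ.pi fun _ : Fin n => Set.Icc (-R) R) ×ˢ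
      (Set.univ.pi fun _ : Fin n => Set.Icc (-R) R)) :=
    ⟨fun i _ => abs_le.mp (ha i), fun i _ => abs_le.mp (hb i)⟩
  exact (isMinOn_iff.mp hmin (a, b) h).trans hab

lemma grad_ineq {n : ℕ} (η : ℝ) (C : Fin n → Fin n → ℝ) (r c u v a b : Fin n → ℝ) :
    dualObj η C r c u v - dualObj η C r c a b ≤
      ∑ i, (u i - a i) * (rowSum η C u v i - r i) +
      ∑ j, (v j - b j) * (colSum η C u v j - c j) := by
  have key : ∑ i, ∑ j, Bmat η C u v i j - ∑ i, ∑ j, Bmat η C a b i j ≤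
      ∑ i, (u i - a i) * rowSum η C u v i + ∑ j, (v j - b j) * colSum η C u v j := by
    unfold rowSum colSum
    simp only [Finset.mul_sum]
    rw [Finset.sum_comm (f := fun j i => (v j - b j) * Bmat η C u v i j)]
    simp only [← Finset.sum_add_distrib, ← Finset.sum_sub_distrib]
    refine Finset.sum_le_sum fun i _ => Finset.sum_le_sum fun j _ => ?_
    unfold Bmat
    set x := u i + v j - C i j / η with hx
    set y := a i + b j - C i j / η with hy
    have e : Real.exp y = Real.exp x * Real.exp (y - x) := by
      rw [← Real.exp_add]; congr 1; ring
    have h1 := Real.add_one_le_exp (y - x)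
    have h2 : (u i - a i) + (v j - b j) = x - y := by rw [hx, hy]; ring
    rw [← add_mul, h2, e]
    have := Real.exp_pos x
    nlinarith
  unfold dualObj
  simp only [mul_sub, sub_mul, Finset.sum_sub_distrib] at key ⊢
  linarith

theorem stmt5 (n : ℕ) (hn : 2 ≤ n) (η : ℝ) (hη : 0 < η)
    (C : Fin n → Fin n → ℝ) (hC : ∀ i j, 0 ≤ C i j)
    (r c : Fin n → ℝ) (hr : ∀ i, 0 < r i) (hc : ∀ j, 0 < c j)
    (hr1 : ∑ i, r i = 1) (hc1 : ∑ j, c j = 1)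
    (U V : ℕ → Fin n → ℝ) (hU0 : U 0 = 0) (hV0 : V 0 = 0)
    (hstep : ∀ t, GreenkhornStep η C r c (U t) (V t) (U (t + 1)) (V (t + 1)))
    (R : ℝ)
    (hR : R = matSup C / η + Real.log (n : ℝ) - 2 * Real.log (minrc r c)) :
    ∀ t : ℕ,
      dualObj η C r c (U t) (V t) -
        (⨅ p : (Fin n → ℝ) × (Fin n → ℝ), dualObj η C r c p.1 p.2) ≤
      4 * R * resid η C r c (U t) (V t) := by
  have i0 : Fin n := ⟨0, by omega⟩
  have : Nonempty (Fin n) := ⟨i0⟩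
  have hCM : ∀ i j, C i j ≤ matSup C := fun i j =>
    (le_ciSup (Set.finite_range (C i)).bddAbove j).trans
      (le_ciSup (f := fun i => ⨆ j, C i j) (Set.finite_range _).bddAbove i)
  have hmr : ∀ i, minrc r c ≤ r i := fun i =>
    (min_le_left _ _).trans (ciInf_le (Set.finite_range r).bddBelow i)
  have hmc : ∀ i, minrc r c ≤ c i := fun i =>
    (min_le_right _ _).trans (ciInf_le (Set.finite_range c).bddBelow i)
  have hm : 0 < minrc r c := by
    obtain ⟨i, hi⟩ := exists_eq_ciInf_of_finite (f := r)
    obtain ⟨j, hj⟩ := exists_eq_ciInf_of_finite (f := c)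
    unfold minrc
    rw [← hi, ← hj]
    exact lt_min (hr i) (hc j)
  obtain ⟨a, b, ha, hb, hmin⟩ := exists_min' hn η C (matSup C / η) (minrc r c)
    (fun i j => div_nonneg (hC i j) hη.le)
    (fun i j => div_le_div_of_nonneg_right (hCM i j) hη.le) r c hm hmr hmc hr1 hc1
  rw [← hR] at ha hb
  have hR0 : 0 ≤ R := (abs_nonneg _).trans (ha i0)
  have hfa : ∀ i, a i = TT η C r b i := upd_eq η C r c a b hr (hmin _ _)
  have hfb : ∀ i, b i = TT η (fun x y => C y x) c a i :=
    upd_eq η _ c r b a hc (by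
      rw [← dualObj_swap, ← dualObj_swap η C r c]; exact hmin _ _)
  have hinv : ∀ t, (∀ i, |U t i - a i| ≤ R) ∧ (∀ i, |V t i - b i| ≤ R) := by
    intro t
    induction t with
    | zero => simpa [hU0, hV0] using ⟨ha, hb⟩
    | succ t ih =>
      rcases hstep t with ⟨I, h1, h2, h3⟩ | ⟨J, h1, h2, h3⟩
      · refine ⟨fun i => ?_, by rw [h3]; exact ih.2⟩
        by_cases hi : i = I
        · subst hi
          rw [h1, step_TT, hfa]
          exact TT_lip η C r _ _ R ih.2 i
        · rw [h2 i hi]; exact ih.1 i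
      · refine ⟨by rw [h3]; exact ih.1, fun j => ?_⟩
        by_cases hj : j = J
        · subst hj
          rw [h1, colSum_swap, step_TT, hfb]
          exact TT_lip η _ c _ _ R ih.1 j
        · rw [h2 j hj]; exact ih.2 j
  intro t
  have hinf : dualObj η C r c a b ≤
      ⨅ p : (Fin n → ℝ) × (Fin n → ℝ), dualObj η C r c p.1 p.2 :=
    le_ciInf fun p => hmin p.1 p.2
  have hg := grad_ineq η C r c (U t) (V t) a b
  have hb1 : ∀ x y : ℝ, |x| ≤ R → x * y ≤ R * |y| := fun x y h =>
    (le_abs_self _).trans (by rw [abs_mul]; exact mul_le_mul_of_nonneg_right h (abs_nonneg _))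
  have hE : ∑ i, (U t i - a i) * (rowSum η C (U t) (V t) i - r i) +
      ∑ j, (V t j - b j) * (colSum η C (U t) (V t) j - c j) ≤
      R * resid η C r c (U t) (V t) := by
    unfold resid
    rw [mul_add, Finset.mul_sum, Finset.mul_sum]
    exact add_le_add (Finset.sum_le_sum fun i _ => hb1 _ _ ((hinv t).1 i))
      (Finset.sum_le_sum fun i _ => hb1 _ _ ((hinv t).2 i))
  have hE0 : 0 ≤ resid η C r c (U t) (V t) := by
    unfold resid; positivity
  nlinarith [mul_nonneg hR0 hE0]
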